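/- arXiv:1603.04261 — 4 statements merged into one kernel-verified Lean document; each statement's English description precedes it below -/
import Mathlib

section
/- Let d ≥ 1 and k ≥ 1 be integers. Then the product over j from 0 to k-1 of (1 - 3/(4d) + (3/d)·2^{-j-1}) is at most exp(12/(4d-3))·(1 - 3/(4d))^k. -/
/-- The product of per-level contraction factors of a median tree is bounded by
exp(12/(4d-3))·(1 - 3/(4d))^k. -/
theorem product_contraction_bound (d k : ℕ) (hd : 1 ≤ d) (hk : 1 ≤ k) :
    ∏ j ∈ Finset.range k,
      (1 - 3 / (4 * (d : ℝ)) + (3 / (d : ℝ)) * (2 : ℝ) ^ (-(j : ℝ) - 1)) ≤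
      Real.exp (12 / (4 * (d : ℝ) - 3)) * (1 - 3 / (4 * (d : ℝ))) ^ k := by
  have hd' : (1 : ℝ) ≤ d := by exact_mod_cast hd
  have hd0 : (0 : ℝ) < d := by linarith
  have h3 : (0 : ℝ) < 4 * d - 3 := by linarith
  have ha : 0 < 1 - 3 / (4 * (d : ℝ)) := by
    rw [sub_pos, div_lt_one (by positivity)]; linarith
  have hc : 3 / (d : ℝ) = (1 - 3 / (4 * (d : ℝ))) * (12 / (4 * (d : ℝ) - 3)) := by
    have e : 1 - 3 / (4 * (d : ℝ)) = (4 * d - 3) / (4 * d) := by field_simp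
    rw [e, div_mul_div_comm, div_eq_div_iff hd0.ne' (by positivity)]
    ring
  have hc0 : 0 < 12 / (4 * (d : ℝ) - 3) := by positivity
  rw [hc]
  generalize 12 / (4 * (d : ℝ) - 3) = c at *
  generalize 1 - 3 / (4 * (d : ℝ)) = a at *
  have hp : ∀ j : ℕ, (2 : ℝ) ^ (-(j : ℝ) - 1) = (1 / 2) ^ (j + 1) := by
    intro j
    rw [show (-(j : ℝ) - 1) = -((j + 1 : ℕ) : ℝ) by push_cast; ring,
      Real.rpow_neg (by norm_num), Real.rpow_natCast, one_div, inv_pow]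
  have key : ∀ n : ℕ, ∏ j ∈ Finset.range n, (a + a * c * (2 : ℝ) ^ (-(j : ℝ) - 1)) ≤
      Real.exp (c * (1 - (1 / 2) ^ n)) * a ^ n := by
    intro n
    induction n with
    | zero => simp
    | succ n ih =>
      rw [Finset.prod_range_succ, hp]
      have h1 : a + a * c * (1 / 2) ^ (n + 1) ≤ a * Real.exp (c * (1 / 2) ^ (n + 1)) := by
        have := mul_le_mul_of_nonneg_left
          (Real.add_one_le_exp (c * (1 / 2 : ℝ) ^ (n + 1))) ha.le
        linarith
      have h2 : (0 : ℝ) ≤ a + a * c * (1 / 2) ^ (n + 1) := by positivity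
      calc _ ≤ (Real.exp (c * (1 - (1 / 2) ^ n)) * a ^ n) *
            (a * Real.exp (c * (1 / 2) ^ (n + 1))) :=
            mul_le_mul ih h1 h2 (by positivity)
        _ = (Real.exp (c * (1 - (1 / 2) ^ n)) * Real.exp (c * (1 / 2) ^ (n + 1))) *
            a ^ (n + 1) := by ring
        _ = _ := by
          rw [← Real.exp_add]
          congr 2
          ring
  refine (key k).trans ?_
  have : c * (1 - (1 / 2) ^ k) ≤ c := by
    have : 0 < c * (1 / 2 : ℝ) ^ k := by positivity
    linarith
  gcongr
end

section
/- Let d ≥ 1 and k ≥ 1 be integers and let a be a real number with a ≥ 2^(k+2). Then the product over j from 1 to k of (1 - 1/d + (1/(4d))·(1 + 2^(j+1)/a)^2) is at most exp(12/(4d-3))·(1 - 3/(4d))^k. -/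
lemma plb_aux (d : ℕ) (hd : 1 ≤ d) (a : ℝ) (h0 : 0 < a) (m : ℕ) (ha : (2 : ℝ) ^ (m + 2) ≤ a) :
    ∏ j ∈ Finset.Icc 1 m,
      (1 - 1 / (d : ℝ) + (1 / (4 * (d : ℝ))) * (1 + (2 : ℝ) ^ (j + 1) / a) ^ 2) ≤
      Real.exp (3 * ((2 : ℝ) ^ (m + 2) / a) / (4 * (d : ℝ) - 3)) * (1 - 3 / (4 * (d : ℝ))) ^ m := by
  have hd' : (1 : ℝ) ≤ d := by exact_mod_cast hd
  have hD : (0 : ℝ) < 4 * d - 3 := by linarith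
  have hc : (0 : ℝ) < 1 - 3 / (4 * (d : ℝ)) := by
    rw [sub_pos, div_lt_one (by linarith)]; linarith
  induction m with
  | zero =>
    simp only [Finset.Icc_eq_empty_of_lt Nat.zero_lt_one, Finset.prod_empty, pow_zero, mul_one]
    apply Real.one_le_exp
    positivity
  | succ m ih =>
    have e : (2 : ℝ) ^ (m + 1 + 2) = 2 * 2 ^ (m + 2) := by ring
    have hp : (0 : ℝ) < 2 ^ (m + 2) := by positivity
    have ih := ih (by linarith)
    rw [Finset.prod_Icc_succ_top (by omega)]
    have e2 : (2 : ℝ) ^ (m + 1 + 1) = 2 ^ (m + 2) := by ring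
    rw [e2]
    have e3 : (2 : ℝ) ^ (m + 1 + 2) / a = 2 ^ (m + 2) / a + 2 ^ (m + 2) / a := by rw [e]; ring
    rw [e3]
    have hx0 : 0 < (2 : ℝ) ^ (m + 2) / a := by positivity
    have hx1 : (2 : ℝ) ^ (m + 2) / a ≤ 1 := by rw [div_le_one h0]; linarith
    generalize (2 : ℝ) ^ (m + 2) / a = x at *
    have hf : 1 - 1 / (d : ℝ) + (1 / (4 * (d : ℝ))) * (1 + x) ^ 2
        = (1 - 3 / (4 * (d : ℝ))) * ((2 * x + x ^ 2) / (4 * d - 3) + 1) := by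
      have : (d : ℝ) ≠ 0 := by linarith
      have hE : 1 - 3 / (4 * (d : ℝ)) = (4 * d - 3) / (4 * d) := by field_simp
      have hF : (4 * (d : ℝ) - 3) * ((2 * x + x ^ 2) / (4 * d - 3) + 1)
          = 2 * x + x ^ 2 + (4 * d - 3) := by
        rw [mul_add, mul_div_cancel₀ _ hD.ne', mul_one]
      rw [hE, div_mul_eq_mul_div (4 * (d : ℝ) - 3), hF]
      field_simp
      ring
    have hle : (2 * x + x ^ 2) / (4 * (d : ℝ) - 3) + 1 ≤ Real.exp (3 * x / (4 * d - 3)) := by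
      refine le_trans ?_ (Real.add_one_le_exp _)
      gcongr
      nlinarith
    have e4 : 3 * (x + x) / (4 * (d : ℝ) - 3) = 3 * x / (4 * d - 3) + 3 * x / (4 * d - 3) := by ring
    rw [hf, e4, Real.exp_add, pow_succ]
    calc _ ≤ (Real.exp (3 * x / (4 * d - 3)) * (1 - 3 / (4 * (d : ℝ))) ^ m) *
          ((1 - 3 / (4 * (d : ℝ))) * Real.exp (3 * x / (4 * d - 3))) := by
          apply mul_le_mul ih _ (by positivity) (by positivity)
          exact mul_le_mul_of_nonneg_left hle hc.le
      _ = _ := by ring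

/-- Bound on the product of expected squared contraction factors at levels 1,…,k
of a median tree grown on a subsample of size a ≥ 2^(k+2) in dimension d. -/
theorem product_level_bound (d k : ℕ) (hd : 1 ≤ d) (hk : 1 ≤ k) (a : ℝ)
    (ha : a ≥ (2 : ℝ) ^ ((k : ℝ) + 2)) :
    ∏ j ∈ Finset.Icc 1 k,
      (1 - 1 / (d : ℝ) + (1 / (4 * (d : ℝ))) * (1 + (2 : ℝ) ^ ((j : ℝ) + 1) / a) ^ 2) ≤
      Real.exp (12 / (4 * (d : ℝ) - 3)) * (1 - 3 / (4 * (d : ℝ))) ^ k := by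
  have hd' : (1 : ℝ) ≤ d := by exact_mod_cast hd
  have hD : (0 : ℝ) < 4 * d - 3 := by linarith
  have hc : (0 : ℝ) < 1 - 3 / (4 * (d : ℝ)) := by
    rw [sub_pos, div_lt_one (by linarith)]; linarith
  have e1 : ∀ j : ℕ, (2 : ℝ) ^ ((j : ℝ) + 1) = 2 ^ (j + 1) := fun j => by
    rw [← Real.rpow_natCast]; push_cast; rfl
  have e2 : (2 : ℝ) ^ ((k : ℝ) + 2) = 2 ^ (k + 2) := by
    rw [← Real.rpow_natCast]; push_cast; rfl
  rw [e2] at ha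
  have h0 : 0 < a := lt_of_lt_of_le (by positivity) ha
  simp only [e1]
  refine (plb_aux d hd a h0 k ha).trans ?_
  have hx1 : (2 : ℝ) ^ (k + 2) / a ≤ 1 := by rw [div_le_one h0]; exact ha
  gcongr
  linarith
end

section
/- Let d ≥ 1, k ≥ 1 and a be natural numbers with a ≥ 2^(k+2), and let n_0, n_1, …, n_k be natural numbers with n_0 = a such that for every j with 1 ≤ j ≤ k one has 2·n_j ≤ n_{j-1} and (n_{j-1} : ℝ) ≥ a·2^{-(j-1)} - 2. Then the product over j from 1 to k of ( (d-1)/d + (1/d)·((n_j+1)(n_j+2))/((n_{j-1}+1)(n_{j-1}+2)) ) is at most exp(12/(4d-3))·(1 - 3/(4d))^k, where all quotients and powers are taken in the real numbers. -/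
theorem aux_sum (k : ℕ) : ∑ j ∈ Finset.Icc 1 k, (2:ℝ)^j ≤ 2^(k+1) := by
  induction k with
  | zero => simp
  | succ k ih =>
    rw [Finset.sum_Icc_succ_top (by omega)]
    rw [pow_succ (2:ℝ) (k+1)]
    linarith

theorem aux_factor (d m p t : ℝ) (hd : 1 ≤ d) (hp : 0 ≤ p) (hm : 2 * p ≤ m) (ht : 0 < t)
    (hmt : 1 ≤ t * (m + 1)) :
    (d - 1) / d + (1 / d) * ((p + 1) * (p + 2)) / ((m + 1) * (m + 2)) ≤
      (1 - 3 / (4 * d)) * Real.exp (3 / (4 * d - 3) * t) := by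
  have hd0 : 0 < d := by linarith
  have h43 : 0 < 4 * d - 3 := by linarith
  have hm0 : 0 ≤ m := by linarith
  have h1 : ((p + 1) * (p + 2)) / ((m + 1) * (m + 2)) ≤ 1 / 4 + 3 / 4 * t := by
    rw [div_le_iff₀ (by positivity)]
    have h2 : (p + 1) * (p + 2) ≤ (m / 2 + 1) * (m / 2 + 2) := by
      gcongr <;> linarith
    have h3 : 0 ≤ (t * (m + 1) - 1) * (m + 2) := mul_nonneg (by linarith) (by linarith)
    nlinarith
  have h4 : 0 ≤ 1 - 3 / (4 * d) := by
    have : 1 - 3 / (4 * d) = (4 * d - 3) / (4 * d) := by field_simp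
    rw [this]; positivity
  calc _ = (d - 1) / d + (1 / d) * (((p + 1) * (p + 2)) / ((m + 1) * (m + 2))) := by
        rw [mul_div_assoc]
    _ ≤ (d - 1) / d + (1 / d) * (1 / 4 + 3 / 4 * t) := by gcongr
    _ = (1 - 3 / (4 * d)) * (3 / (4 * d - 3) * t + 1) := by
        have e1 : 1 - 3 / (4 * d) = (4 * d - 3) / (4 * d) := by field_simp
        have e2 : (4 * d - 3) * (3 / (4 * d - 3)) = 3 := mul_div_cancel₀ 3 h43.ne'
        have e3 : (1 - 3 / (4 * d)) * (3 / (4 * d - 3) * t + 1) =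
            ((4 * d - 3) * (3 / (4 * d - 3)) * t + (4 * d - 3)) / (4 * d) := by
          rw [e1]; ring
        rw [e3, e2]
        field_simp
        ring
    _ ≤ _ := by
        gcongr
        exact Real.add_one_le_exp _

/-- Deterministic core of the cell-length lemma for median forests: the product of
the factors (d-1)/d + (1/d)·((n_j+1)(n_j+2))/((n_{j-1}+1)(n_{j-1}+2)) over the
levels j = 1,…,k is bounded by exp(12/(4d-3))·(1 - 3/(4d))^k. -/
theorem cell_length_core (d k a : ℕ) (hd : 1 ≤ d) (hk : 1 ≤ k)
    (ha : 2 ^ (k + 2) ≤ a) (n : ℕ → ℕ) (hn0 : n 0 = a)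
    (hhalf : ∀ j, 1 ≤ j → j ≤ k → 2 * n j ≤ n (j - 1))
    (hlow : ∀ j, 1 ≤ j → j ≤ k →
      ((n (j - 1) : ℝ)) ≥ (a : ℝ) * (2 : ℝ) ^ (-((j : ℝ) - 1)) - 2) :
    ∏ j ∈ Finset.Icc 1 k,
      (((d : ℝ) - 1) / (d : ℝ) +
        (1 / (d : ℝ)) *
          (((n j : ℝ) + 1) * ((n j : ℝ) + 2)) /
            (((n (j - 1) : ℝ) + 1) * ((n (j - 1) : ℝ) + 2))) ≤
      Real.exp (12 / (4 * (d : ℝ) - 3)) * (1 - 3 / (4 * (d : ℝ))) ^ k := by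
  have hd' : (1:ℝ) ≤ d := by exact_mod_cast hd
  have h43 : (0:ℝ) < 4 * d - 3 := by linarith
  have h4 : (0:ℝ) ≤ 1 - 3 / (4 * d) := by
    have : (1:ℝ) - 3 / (4 * d) = (4 * d - 3) / (4 * d) := by field_simp
    rw [this]; positivity
  have key : ∀ j ∈ Finset.Icc 1 k, (((d : ℝ) - 1) / (d : ℝ) +
        (1 / (d : ℝ)) *
          (((n j : ℝ) + 1) * ((n j : ℝ) + 2)) /
            (((n (j - 1) : ℝ) + 1) * ((n (j - 1) : ℝ) + 2))) ≤
      (1 - 3 / (4 * (d : ℝ))) * Real.exp (3 / (4 * (d:ℝ) - 3) * (2 ^ j / 2 ^ (k + 2))) := by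
    intro j hj
    obtain ⟨hj1, hjk⟩ := Finset.mem_Icc.mp hj
    apply aux_factor _ _ _ _ hd' (by positivity) (by exact_mod_cast hhalf j hj1 hjk)
      (by positivity)
    have hl := hlow j hj1 hjk
    have e : (2:ℝ) ^ (-((j:ℝ) - 1)) = 2 / 2 ^ j := by
      rw [neg_sub, Real.rpow_sub (by norm_num), Real.rpow_one, Real.rpow_natCast]
    rw [e] at hl
    have ha' : (2:ℝ) ^ (k + 2) ≤ a := by exact_mod_cast ha
    have hP : (0:ℝ) < 2 ^ (k + 2) := by positivity
    have hJ : (0:ℝ) < 2 ^ j := by positivity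
    have hJP : (2:ℝ) ^ j ≤ 2 ^ (k + 2) := pow_le_pow_right₀ (by norm_num) (by omega)
    rw [div_mul_eq_mul_div, le_div_iff₀ hP, one_mul]
    have : (2:ℝ) ^ j * (a * (2 / 2 ^ j) - 2 + 1) ≤ 2 ^ j * ((n (j - 1) : ℝ) + 1) := by
      gcongr
    have e2 : (2:ℝ) ^ j * (a * (2 / 2 ^ j) - 2 + 1) = 2 * a - 2 ^ j := by
      field_simp
      ring
    linarith
  refine (Finset.prod_le_prod ?_ key).trans ?_
  · intro j _
    have : (0:ℝ) ≤ (d:ℝ) - 1 := by linarith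
    positivity
  rw [Finset.prod_mul_distrib, Finset.prod_const, Nat.card_Icc, Nat.add_sub_cancel,
    ← Real.exp_sum, mul_comm, ← Finset.mul_sum, ← Finset.sum_div]
  gcongr
  have hs : (∑ j ∈ Finset.Icc 1 k, (2:ℝ) ^ j) / 2 ^ (k + 2) ≤ 1 := by
    rw [div_le_one (by positivity)]
    exact (aux_sum k).trans (pow_le_pow_right₀ (by norm_num) (by omega))
  calc _ ≤ 3 / (4 * (d:ℝ) - 3) * 1 := by gcongr
    _ ≤ _ := by
      rw [mul_one]
      gcongr
      norm_num
end

section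
/- Let d ≥ 1 be an integer and set β = 1 - 3/(4d). Then ln β / (ln 2 - ln β) ≤ -3/(4d·ln 2 + 3). -/
/-- The median forest rate exponent ln β/(ln 2 - ln β), with β = 1 - 3/(4d),
is at most the centred forest rate exponent -3/(4d·ln 2 + 3). -/
theorem rate_comparison (d : ℕ) (hd : 1 ≤ d) (β : ℝ)
    (hβ : β = 1 - 3 / (4 * (d : ℝ))) :
    Real.log β / (Real.log 2 - Real.log β) ≤
      -3 / (4 * (d : ℝ) * Real.log 2 + 3) := by
  have hd' : (1 : ℝ) ≤ d := by exact_mod_cast hd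
  have h2 : 0 < Real.log 2 := Real.log_pos (by norm_num)
  have hq : 3 / (4 * (d : ℝ)) < 1 := by
    rw [div_lt_one (by positivity)]; linarith
  have hq0 : 0 < 3 / (4 * (d : ℝ)) := by positivity
  have hL := Real.log_le_sub_one_of_pos (x := β) (by linarith)
  have hL' : Real.log β ≤ -(3 / (4 * (d : ℝ))) := by linarith
  have hm : 4 * (d : ℝ) * Real.log β ≤ -3 := by
    calc 4 * (d : ℝ) * Real.log β ≤ 4 * (d : ℝ) * (-(3 / (4 * (d : ℝ)))) := by gcongr
      _ = -3 := by field_simp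
  rw [div_le_div_iff₀ (by linarith) (by positivity)]
  have := mul_le_mul_of_nonneg_right hm h2.le
  linarith
end
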